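/- Consider the complete graph on the six vertices {0, 1, a, x, y, z} with vertex weights w(a) = w(1) = 2 and w(0) = w(x) = w(y) = w(z) = 1, and edge weights w(i,j) = w(i)·w(j) + δ(i,j) where δ(i,j) = 1 if {i,j} = {0,1} and δ(i,j) = 0 otherwise. Every triangle-free subgraph H of weight strictly greater than 16 satisfies: H is bipartite; the vertices 0, x, y, z lie in a common connected component of H with the distance in H from 0 to each of x, y, z at most 2; and for every 2-colouring c of the vertices that is proper on H (i.e., c(u) ≠ c(v) for every edge (u,v) of H) one has c(0) + c(x) + c(y) + c(z) = 0 in ℤ/2. -/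

import Mathlib

/-- The vertex weight on the six vertices `{0, 1, a, x, y, z}`, encoded as `Fin 6` with
`0 ↦ 0`, `1 ↦ 1`, `2 ↦ a`, `3 ↦ x`, `4 ↦ y`, `5 ↦ z`: the vertices `a` and `1` have
weight `2`, all others weight `1`. -/
def w6 : Fin 6 → ℕ := fun i => if i = 1 ∨ i = 2 then 2 else 1

/-- Edge weight `w(i)·w(j) + δ(i,j)`, where `δ` is `1` on the pair `{0, 1}` and `0`
elsewhere. -/
def ew6 : Fin 6 → Fin 6 → ℕ := fun i j =>
  w6 i * w6 j + (if (i = 0 ∧ j = 1) ∨ (i = 1 ∧ j = 0) then 1 else 0)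

/-!
Let `d` be the `w`-weighted degree and `W` the total weight. In a triangle-free graph adjacent
vertices have disjoint neighbourhoods, so `d u + d v ≤ W` along every edge. Summing `w u * w v`
times this over the edges gives
`∑ v, w v * (2 * d v - W) ^ 2 ≤ W * (W ^ 2 - 2 * ∑ v, w v * d v)`.
This is Mantel's theorem for weighted graphs; in its equality case every weighted degree is `W / 2`,
so adjacent vertices have complementary neighbourhoods and the graph is complete bipartite.

Here `W = 8`, so the products `w i * w j` contribute at most `16`. A weight above `16` therefore
needs both the extra unit on the edge `01` and equality in Mantel's bound. In a proper 2-colouring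
`c`, the neighbours of `0` are exactly the vertices coloured differently from `0`. Hence, modulo 2,
`∑ v, w v * c v = W * c 0 + d 0 = 8 * c 0 + 4 = 0`, and the even weights at `1` and `a` drop out.
-/

open Finset SimpleGraph

section WeightedDegree

variable {V M : Type*} [Fintype V] [AddCommMonoid M] (G : SimpleGraph V) [DecidableRel G.Adj]

/-- The total weight of the neighbours of `v`, with respect to a vertex weight `w`. -/
def weightedDegree (w : V → M) (v : V) : M := ∑ u ∈ G.neighborFinset v, w u

@[norm_cast]
theorem weightedDegree_natCast {R : Type*} [AddCommMonoidWithOne R] (w : V → ℕ) (v : V) :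
    weightedDegree G (fun u ↦ (w u : R)) v = (weightedDegree G w v : ℕ) :=
  (Nat.cast_sum _ _).symm

theorem sum_sum_neighborFinset_comm (f : V → V → M) :
    ∑ u, ∑ v ∈ G.neighborFinset u, f u v = ∑ v, ∑ u ∈ G.neighborFinset v, f u v :=
  sum_comm' fun u v ↦ by simp [G.adj_comm u v]

theorem sum_sum_neighborFinset_eq_two_nsmul_sum_lt [LinearOrder V] (f : V → V → M)
    (hf : ∀ u v, f u v = f v u) :
    ∑ u, ∑ v ∈ G.neighborFinset u, f u v =
      2 • ∑ q : V × V with q.1 < q.2 ∧ G.Adj q.1 q.2, f q.1 q.2 := by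
  have swap : ∑ q : V × V with q.2 < q.1 ∧ G.Adj q.1 q.2, f q.1 q.2 =
      ∑ q : V × V with q.1 < q.2 ∧ G.Adj q.1 q.2, f q.1 q.2 :=
    sum_equiv (Equiv.prodComm V V) (by simp [G.adj_comm]) fun q _ ↦ hf q.1 q.2
  rw [two_nsmul]
  nth_rw 2 [← swap]
  simp only [neighborFinset_eq_filter, sum_filter, ← sum_add_distrib, ← Fintype.sum_prod_type']
  refine sum_congr rfl fun q _ ↦ ?_
  by_cases hq : G.Adj q.1 q.2
  · rcases hq.ne.lt_or_gt with h | h <;> simp [hq, h, h.not_gt]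
  · simp [hq]

end WeightedDegree

section WeightedMantel

variable {V R : Type*} {G : SimpleGraph V}

theorem disjoint_neighborFinset_of_cliqueFree_three [Fintype V] [DecidableRel G.Adj]
    (hG : G.CliqueFree 3) {u v : V} (huv : G.Adj u v) :
    Disjoint (G.neighborFinset u) (G.neighborFinset v) := by
  classical
  refine disjoint_left.2 fun x hux hvx ↦ hG {u, v, x} (is3Clique_triple_iff.2 ?_)
  exact ⟨huv, (G.mem_neighborFinset u x).1 hux, (G.mem_neighborFinset v x).1 hvx⟩

theorem weightedDegree_add_weightedDegree_le [Fintype V] [DecidableRel G.Adj] [AddCommMonoid R]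
    [PartialOrder R] [IsOrderedAddMonoid R] {w : V → R} (hG : G.CliqueFree 3)
    (hw : ∀ v, 0 ≤ w v) {u v : V} (huv : G.Adj u v) :
    weightedDegree G w u + weightedDegree G w v ≤ ∑ x, w x := by
  rw [weightedDegree, weightedDegree,
    ← sum_disjUnion (disjoint_neighborFinset_of_cliqueFree_three hG huv)]
  exact sum_le_univ_sum_of_nonneg hw

variable [Fintype V] [DecidableRel G.Adj] [CommRing R] [LinearOrder R] [IsStrictOrderedRing R]
  {w : V → R}

theorem two_mul_sum_mul_weightedDegree_sq_le (hG : G.CliqueFree 3) (hw : ∀ v, 0 ≤ w v) :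
    2 * ∑ v, w v * weightedDegree G w v ^ 2 ≤
      (∑ v, w v) * ∑ v, w v * weightedDegree G w v := by
  set d := weightedDegree G w with hd
  have sum_left : ∑ u, w u * d u ^ 2 = ∑ u, ∑ v ∈ G.neighborFinset u, w u * w v * d u := by
    refine sum_congr rfl fun u _ ↦ ?_
    rw [← sum_mul, ← mul_sum, sq, ← mul_assoc, hd, weightedDegree]
  have sum_right : ∑ u, w u * d u ^ 2 = ∑ u, ∑ v ∈ G.neighborFinset u, w u * w v * d v := by
    rw [sum_left, sum_sum_neighborFinset_comm]
    simp only [mul_comm (w _) (w _)]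
  calc 2 * ∑ u, w u * d u ^ 2
      = ∑ u, ∑ v ∈ G.neighborFinset u, w u * w v * (d u + d v) := by
        simp only [mul_add, sum_add_distrib, ← sum_left, ← sum_right, two_mul]
    _ ≤ ∑ u, ∑ v ∈ G.neighborFinset u, w u * w v * ∑ x, w x :=
        sum_le_sum fun u _ ↦ sum_le_sum fun v huv ↦ mul_le_mul_of_nonneg_left
          (weightedDegree_add_weightedDegree_le hG hw ((G.mem_neighborFinset u v).1 huv))
          (mul_nonneg (hw u) (hw v))
    _ = (∑ x, w x) * ∑ u, w u * d u := by
        simp only [← sum_mul, ← mul_sum, mul_comm (∑ x, w x), hd, weightedDegree]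

theorem sum_mul_two_mul_weightedDegree_sub_sq_le (hG : G.CliqueFree 3) (hw : ∀ v, 0 ≤ w v) :
    ∑ v, w v * (2 * weightedDegree G w v - ∑ x, w x) ^ 2 ≤
      (∑ v, w v) * ((∑ v, w v) ^ 2 - 2 * ∑ v, w v * weightedDegree G w v) := by
  set W := ∑ v, w v
  set d := weightedDegree G w
  calc ∑ v, w v * (2 * d v - W) ^ 2
      = ∑ v, (4 * (w v * d v ^ 2) - 4 * W * (w v * d v) + W ^ 2 * w v) :=
        sum_congr rfl fun v _ ↦ by ring
    _ = 4 * ∑ v, w v * d v ^ 2 - 4 * W * ∑ v, w v * d v + W ^ 2 * W := by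
        rw [sum_add_distrib, sum_sub_distrib, ← mul_sum, ← mul_sum, ← mul_sum]
    _ ≤ W * (W ^ 2 - 2 * ∑ v, w v * d v) := by
        linarith [two_mul_sum_mul_weightedDegree_sq_le hG hw]

theorem two_mul_sum_mul_weightedDegree_le_sq (hG : G.CliqueFree 3) (hw : ∀ v, 0 ≤ w v) :
    2 * ∑ v, w v * weightedDegree G w v ≤ (∑ v, w v) ^ 2 := by
  rcases (sum_nonneg fun v _ ↦ hw v : 0 ≤ ∑ v, w v).eq_or_lt with hW | hW
  · have hw0 : ∀ v, w v = 0 := fun v ↦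
      (sum_eq_zero_iff_of_nonneg fun v _ ↦ hw v).1 hW.symm v (mem_univ v)
    simp [hw0]
  · have deviation_nonneg : 0 ≤ ∑ v, w v * (2 * weightedDegree G w v - ∑ x, w x) ^ 2 :=
      sum_nonneg fun v _ ↦ mul_nonneg (hw v) (sq_nonneg _)
    have := deviation_nonneg.trans (sum_mul_two_mul_weightedDegree_sub_sq_le hG hw)
    exact sub_nonneg.1 (nonneg_of_mul_nonneg_right this hW)

theorem two_mul_weightedDegree_eq_of_sq_le (hG : G.CliqueFree 3) (hw : ∀ v, 0 < w v)
    (hle : (∑ v, w v) ^ 2 ≤ 2 * ∑ v, w v * weightedDegree G w v) (v : V) :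
    2 * weightedDegree G w v = ∑ x, w x := by
  have hw' : ∀ v, 0 ≤ w v := fun v ↦ (hw v).le
  have term_nonneg : ∀ v ∈ univ, 0 ≤ w v * (2 * weightedDegree G w v - ∑ x, w x) ^ 2 :=
    fun v _ ↦ mul_nonneg (hw' v) (sq_nonneg _)
  have deviation_nonpos : ∑ v, w v * (2 * weightedDegree G w v - ∑ x, w x) ^ 2 ≤ 0 :=
    (sum_mul_two_mul_weightedDegree_sub_sq_le hG hw').trans
      (mul_nonpos_of_nonneg_of_nonpos (sum_nonneg fun v _ ↦ hw' v) (sub_nonpos.2 hle))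
  have term_eq_zero := (sum_eq_zero_iff_of_nonneg term_nonneg).1
    (deviation_nonpos.antisymm (sum_nonneg term_nonneg)) v (mem_univ v)
  exact sub_eq_zero.1 (pow_eq_zero_iff two_ne_zero |>.1
    ((mul_eq_zero_iff_left (hw v).ne').1 term_eq_zero))

theorem isCompleteMultipartite_of_two_mul_weightedDegree_eq (hG : G.CliqueFree 3)
    (hw : ∀ v, 0 < w v) (hd : ∀ v, 2 * weightedDegree G w v = ∑ x, w x) :
    G.IsCompleteMultipartite where
  trans u x v hux hxv huv := by
    classical
    have hdisj := disjoint_neighborFinset_of_cliqueFree_three hG huv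
    have union_subset_erase : (G.neighborFinset u).disjUnion (G.neighborFinset v) hdisj ⊆
        univ.erase x := fun y hy ↦ by
      simp only [mem_disjUnion, mem_neighborFinset] at hy
      refine mem_erase.2 ⟨?_, mem_univ y⟩
      rintro rfl
      exact hy.elim hux (hxv ·.symm)
    have degree_add_le : weightedDegree G w u + weightedDegree G w v ≤ ∑ y ∈ univ.erase x, w y := by
      rw [weightedDegree, weightedDegree, ← sum_disjUnion hdisj]
      exact sum_le_sum_of_subset_of_nonneg union_subset_erase fun y _ _ ↦ (hw y).le
    linarith [hd u, hd v, hw x, add_sum_erase univ w (mem_univ x)]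

end WeightedMantel

section CompleteMultipartite

variable {V : Type*} {G : SimpleGraph V}

theorem adj_or_adj_of_isCompleteMultipartite (hG : G.IsCompleteMultipartite) {u v : V}
    (huv : G.Adj u v) (x : V) : G.Adj u x ∨ G.Adj v x := by
  by_contra! hx
  exact hG.trans u x v hx.1 (hx.2 ·.symm) huv

theorem edist_le_two_of_isCompleteMultipartite (hG : G.IsCompleteMultipartite) {u v : V}
    (huv : G.Adj u v) (x : V) : G.edist u x ≤ 2 := by
  rcases adj_or_adj_of_isCompleteMultipartite hG huv x with hux | hvx
  · exact (edist_le hux.toWalk).trans (by simp)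
  · exact edist_le (.cons huv (.cons hvx .nil))

variable [DecidableRel G.Adj]

theorem coloring_zmod_two_eq_of_isCompleteMultipartite (hG : G.IsCompleteMultipartite)
    (c : G.Coloring (ZMod 2)) {u v : V} (huv : G.Adj u v) (x : V) :
    c x = c u + if G.Adj u x then 1 else 0 := by
  have eq_add_one : ∀ a b : ZMod 2, a ≠ b → b = a + 1 := by decide
  split_ifs with hux
  · exact eq_add_one _ _ (c.valid hux)
  · have hvx := (adj_or_adj_of_isCompleteMultipartite hG huv x).resolve_left hux
    rw [eq_add_one _ _ (c.valid hvx), eq_add_one _ _ (c.valid huv), add_assoc,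
      CharTwo.add_self_eq_zero]

theorem sum_mul_coloring_zmod_two_of_isCompleteMultipartite [Fintype V]
    (hG : G.IsCompleteMultipartite) (c : G.Coloring (ZMod 2)) (w : V → ZMod 2) {u v : V}
    (huv : G.Adj u v) :
    ∑ x, w x * c x = (∑ x, w x) * c u + weightedDegree G w u := by
  calc ∑ x, w x * c x = ∑ x, (w x * c u + if G.Adj u x then w x else 0) :=
        sum_congr rfl fun x _ ↦ by
          rw [coloring_zmod_two_eq_of_isCompleteMultipartite hG c huv x, mul_add, mul_ite, mul_one,
            mul_zero]
    _ = (∑ x, w x) * c u + weightedDegree G w u := by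
        rw [sum_add_distrib, ← sum_mul, ← sum_filter, weightedDegree, neighborFinset_eq_filter]

end CompleteMultipartite

section SixVertices

variable {H : SimpleGraph (Fin 6)} [DecidableRel H.Adj]

theorem w6_pos (v : Fin 6) : 0 < w6 v := by
  revert v
  decide

theorem sum_w6 : ∑ v, w6 v = 8 := by decide

theorem sum_ew6_eq_add_ite (H : SimpleGraph (Fin 6)) [DecidableRel H.Adj] :
    ∑ q : Fin 6 × Fin 6 with q.1 < q.2 ∧ H.Adj q.1 q.2, ew6 q.1 q.2 =
      (∑ q : Fin 6 × Fin 6 with q.1 < q.2 ∧ H.Adj q.1 q.2, w6 q.1 * w6 q.2) +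
        if H.Adj 0 1 then 1 else 0 := by
  have ite_eq : ∀ q : Fin 6 × Fin 6, q.1 < q.2 →
      ((q.1 = 0 ∧ q.2 = 1 ∨ q.1 = 1 ∧ q.2 = 0) ↔ q = (0, 1)) := by decide
  simp only [ew6, sum_add_distrib, Nat.add_left_cancel_iff]
  rw [sum_congr rfl fun q hq ↦ if_congr (ite_eq q (mem_filter.1 hq).2.1) rfl rfl, sum_ite_eq']
  simp

theorem sum_w6_mul_weightedDegree (H : SimpleGraph (Fin 6)) [DecidableRel H.Adj] :
    ∑ v, w6 v * weightedDegree H w6 v =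
      2 * ∑ q : Fin 6 × Fin 6 with q.1 < q.2 ∧ H.Adj q.1 q.2, w6 q.1 * w6 q.2 := by
  simpa only [← mul_sum, nsmul_eq_mul, Nat.cast_ofNat, weightedDegree] using
    sum_sum_neighborFinset_eq_two_nsmul_sum_lt H (fun u v ↦ w6 u * w6 v) fun u v ↦ mul_comm _ _

theorem sum_w6_mul_w6_le (htf : H.CliqueFree 3) :
    ∑ q : Fin 6 × Fin 6 with q.1 < q.2 ∧ H.Adj q.1 q.2, w6 q.1 * w6 q.2 ≤ 16 := by
  have mantel := two_mul_sum_mul_weightedDegree_le_sq (w := fun v ↦ (w6 v : ℤ)) htf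
    fun v ↦ Int.natCast_nonneg _
  norm_cast at mantel
  rw [sum_w6_mul_weightedDegree, sum_w6] at mantel
  lia

theorem adj_zero_one_of_lt_sum_ew6 (htf : H.CliqueFree 3)
    (hw : 16 < ∑ q : Fin 6 × Fin 6 with q.1 < q.2 ∧ H.Adj q.1 q.2, ew6 q.1 q.2) :
    H.Adj 0 1 := by
  by_contra h01
  rw [sum_ew6_eq_add_ite, if_neg h01, add_zero] at hw
  exact hw.not_ge (sum_w6_mul_w6_le htf)

theorem two_mul_weightedDegree_w6_eq_of_lt_sum_ew6 (htf : H.CliqueFree 3)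
    (hw : 16 < ∑ q : Fin 6 × Fin 6 with q.1 < q.2 ∧ H.Adj q.1 q.2, ew6 q.1 q.2) (v : Fin 6) :
    2 * weightedDegree H (fun u ↦ (w6 u : ℤ)) v = ∑ u, (w6 u : ℤ) := by
  have h01 := adj_zero_one_of_lt_sum_ew6 htf hw
  rw [sum_ew6_eq_add_ite, if_pos h01] at hw
  refine two_mul_weightedDegree_eq_of_sq_le htf (fun u ↦ Int.natCast_pos.2 (w6_pos u)) ?_ v
  norm_cast
  rw [sum_w6_mul_weightedDegree, sum_w6]
  lia

theorem isCompleteMultipartite_of_lt_sum_ew6 (htf : H.CliqueFree 3)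
    (hw : 16 < ∑ q : Fin 6 × Fin 6 with q.1 < q.2 ∧ H.Adj q.1 q.2, ew6 q.1 q.2) :
    H.IsCompleteMultipartite :=
  isCompleteMultipartite_of_two_mul_weightedDegree_eq htf
    (fun v ↦ Int.natCast_pos.2 (w6_pos v)) (two_mul_weightedDegree_w6_eq_of_lt_sum_ew6 htf hw)

theorem weightedDegree_w6_eq_four_of_lt_sum_ew6 (htf : H.CliqueFree 3)
    (hw : 16 < ∑ q : Fin 6 × Fin 6 with q.1 < q.2 ∧ H.Adj q.1 q.2, ew6 q.1 q.2) (v : Fin 6) :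
    weightedDegree H w6 v = 4 := by
  have h := two_mul_weightedDegree_w6_eq_of_lt_sum_ew6 htf hw v
  norm_cast at h
  rw [sum_w6] at h
  lia

theorem sum_w6_mul_zmod_two (c : Fin 6 → ZMod 2) :
    ∑ v, (w6 v : ZMod 2) * c v = c 0 + c 3 + c 4 + c 5 := by
  have cast_w6 : ∀ v, (w6 v : ZMod 2) = if v = 1 ∨ v = 2 then 0 else 1 := by decide
  simp [cast_w6, Fin.sum_univ_six]

theorem coloring_zmod_two_sum_eq_zero_of_lt_sum_ew6 (htf : H.CliqueFree 3)
    (hw : 16 < ∑ q : Fin 6 × Fin 6 with q.1 < q.2 ∧ H.Adj q.1 q.2, ew6 q.1 q.2)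
    (c : H.Coloring (ZMod 2)) : c 0 + c 3 + c 4 + c 5 = 0 := by
  calc c 0 + c 3 + c 4 + c 5 = ∑ v, (w6 v : ZMod 2) * c v := (sum_w6_mul_zmod_two c).symm
    _ = (∑ v, (w6 v : ZMod 2)) * c 0 + weightedDegree H (fun v ↦ (w6 v : ZMod 2)) 0 :=
        sum_mul_coloring_zmod_two_of_isCompleteMultipartite
          (isCompleteMultipartite_of_lt_sum_ew6 htf hw) c _ (adj_zero_one_of_lt_sum_ew6 htf hw)
    _ = (8 : ℕ) * c 0 + (4 : ℕ) := by
        rw [weightedDegree_natCast, weightedDegree_w6_eq_four_of_lt_sum_ew6 htf hw, ← Nat.cast_sum,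
          sum_w6]
    _ = 0 := by
        rw [show ((8 : ℕ) : ZMod 2) = 0 from rfl, show ((4 : ℕ) : ZMod 2) = 0 from rfl, zero_mul,
          add_zero]

end SixVertices

/-- Every triangle-free subgraph `H` of the complete graph on `{0, 1, a, x, y, z}` (with
edge weights `w(i)·w(j) + δ(i,j)`) of total weight strictly greater than `16` is
bipartite; the vertices `0, x, y, z` lie in a common connected component of `H`, with the
distance in `H` from `0` to each of `x, y, z` at most `2`; and every `2`-colouring `c`
that is proper on `H` satisfies `c 0 + c x + c y + c z = 0` in `ℤ/2`. -/
theorem stmt_13 (H : SimpleGraph (Fin 6)) [DecidableRel H.Adj] (htf : H.CliqueFree 3)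
    (hw : 16 < ∑ q ∈ Finset.univ.filter (fun q : Fin 6 × Fin 6 => q.1 < q.2 ∧ H.Adj q.1 q.2),
      ew6 q.1 q.2) :
    H.Colorable 2 ∧
    (H.Reachable 0 3 ∧ H.Reachable 0 4 ∧ H.Reachable 0 5) ∧
    (H.dist 0 3 ≤ 2 ∧ H.dist 0 4 ≤ 2 ∧ H.dist 0 5 ≤ 2) ∧
    ∀ c : Fin 6 → ZMod 2, (∀ i j, H.Adj i j → c i ≠ c j) →
      c 0 + c 3 + c 4 + c 5 = 0 := by
  have multipartite := isCompleteMultipartite_of_lt_sum_ew6 htf hw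
  have edist_le (v : Fin 6) : H.edist 0 v ≤ 2 :=
    edist_le_two_of_isCompleteMultipartite multipartite (adj_zero_one_of_lt_sum_ew6 htf hw) v
  have reachable (v : Fin 6) : H.Reachable 0 v :=
    reachable_of_edist_ne_top (ne_top_of_le_ne_top (by simp) (edist_le v))
  have dist_le (v : Fin 6) : H.dist 0 v ≤ 2 := ENat.toNat_le_of_le_natCast (edist_le v)
  exact ⟨multipartite.colorable_of_cliqueFree htf,
    ⟨reachable 3, reachable 4, reachable 5⟩, ⟨dist_le 3, dist_le 4, dist_le 5⟩,
    fun c hc ↦ coloring_zmod_two_sum_eq_zero_of_lt_sum_ew6 htf hw (.mk c (hc _ _))⟩
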